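/- arXiv:2007.02594 — 3 statements merged into one kernel-verified Lean document; each statement's English description precedes it below -/
import Mathlib

section
/- Let I be a finite index set, let (n_i)_{i∈I} and (b_i)_{i∈I} be families of positive integers, and let ε > 0 be a real number. Then there exist a positive integer p and positive integers (c_i)_{i∈I} such that b_i < c_i/p < b_i + ε for every i ∈ I, and such that for all i ≠ j in I the rational number n_i·c_j/c_i is not an integer. -/
/-!
Choose pairwise distinct primes `q i`, all larger than every `n j`, and put `c i = p * b i + q i` with
`p = M * ∏ j, q j`. Then `q i ∣ c i`, while for `j ≠ i` the prime `q i` divides neither `n i`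
(which is smaller) nor `c j` (which is congruent to the other prime `q j` modulo `q i`). Hence
`c i ∤ n i * c j`. As `q i ≤ ∏ j, q j`, the error `q i / p` is at most `1 / M`, which is less than
`ε` for large `M`.
-/

/-- Primes indexed by a finite type, pairwise distinct and all larger than a given bound. -/
lemma exists_injective_primes (I : Type*) [Fintype I] (N : ℕ) :
    ∃ q : I → ℕ, Function.Injective q ∧ ∀ i, (q i).Prime ∧ N < q i := by
  refine ⟨fun i => Nat.nth Nat.Prime (N + Fintype.equivFin I i), ?_, fun i => ⟨?_, ?_⟩⟩
  · intro i j h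
    have h1 := Nat.nth_injective Nat.infinite_setOfPred_prime h
    exact (Fintype.equivFin I).injective (Fin.ext (Nat.add_left_cancel h1))
  · exact Nat.prime_nth_prime _
  · have := Nat.add_two_le_nth_prime (N + Fintype.equivFin I i)
    dsimp only
    omega

/-- Given finite families of positive integers `n i`, `b i` and `ε > 0`,
there exist a positive integer `p` and positive integers `c i` with
`b i < c i / p < b i + ε` for all `i`, and `n i * c j / c i ∉ ℤ` for all `i ≠ j`. -/
theorem stmt_0 {I : Type*} [Fintype I] (n b : I → ℕ)
    (hn : ∀ i, 0 < n i) (hb : ∀ i, 0 < b i) (ε : ℝ) (hε : 0 < ε) :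
    ∃ (p : ℕ) (c : I → ℕ), 0 < p ∧ (∀ i, 0 < c i) ∧
      (∀ i, (b i : ℝ) < (c i : ℝ) / (p : ℝ) ∧ (c i : ℝ) / (p : ℝ) < (b i : ℝ) + ε) ∧
      (∀ i j, i ≠ j → ¬ ∃ z : ℤ, ((n i : ℚ) * (c j : ℚ)) / (c i : ℚ) = (z : ℚ)) := by
  obtain ⟨q, hinj, hq⟩ := exists_injective_primes I (∑ i, n i)
  have hnq : ∀ i, n i < q i := fun i =>
    (Finset.single_le_sum (f := n) (fun _ _ => Nat.zero_le _) (Finset.mem_univ i)).trans_lt (hq i).2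
  obtain ⟨M, hM⟩ := exists_nat_gt (1 / ε)
  have hMε : 1 < (M : ℝ) * ε := (div_lt_iff₀ hε).1 hM
  have hM0 : 0 < M := by
    have : (0 : ℝ) < M := (one_div_pos.2 hε).trans hM
    exact_mod_cast this
  have hQ0 : 0 < ∏ j, q j := Finset.prod_pos fun j _ => (hq j).1.pos
  have hdvd : ∀ i, q i ∣ ∏ j, q j := fun i => Finset.dvd_prod_of_mem q (Finset.mem_univ i)
  set Q := ∏ j, q j
  have hp0 : (0 : ℝ) < ((M * Q : ℕ) : ℝ) := by exact_mod_cast Nat.mul_pos hM0 hQ0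
  refine ⟨M * Q, fun i => M * Q * b i + q i, Nat.mul_pos hM0 hQ0,
    fun i => Nat.add_pos_right _ (hq i).1.pos, fun i => ?_, fun i j hij => ?_⟩
  · have hqi : (0 : ℝ) < q i := by exact_mod_cast (hq i).1.pos
    have hqQ : (q i : ℝ) ≤ Q := by exact_mod_cast Nat.le_of_dvd hQ0 (hdvd i)
    have hQ : (0 : ℝ) < Q := by exact_mod_cast hQ0
    rw [lt_div_iff₀ hp0, div_lt_iff₀ hp0]
    push_cast
    constructor <;> nlinarith
  · rintro ⟨z, hz⟩
    have hc : ((M * Q * b i + q i : ℕ) : ℚ) ≠ 0 := by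
      exact_mod_cast (Nat.add_pos_right _ (hq i).1.pos).ne'
    rw [div_eq_iff hc] at hz
    have hz' : (n i : ℤ) * ((M * Q * b j + q j : ℕ) : ℤ)
        = z * ((M * Q * b i + q i : ℕ) : ℤ) := by exact_mod_cast hz
    have hQk : ∀ k, q i ∣ M * Q * b k := fun k => ((hdvd i).mul_left M).mul_right (b k)
    have hci : q i ∣ M * Q * b i + q i := (hQk i).add dvd_rfl
    have hmul : q i ∣ n i * (M * Q * b j + q j) := by
      have h : (q i : ℤ) ∣ (n i : ℤ) * ((M * Q * b j + q j : ℕ) : ℤ) :=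
        hz' ▸ (Int.natCast_dvd_natCast.2 hci).mul_left z
      exact_mod_cast h
    rcases (hq i).1.dvd_mul.1 hmul with h | h
    · exact (Nat.le_of_dvd (hn i) h).not_gt (hnq i)
    · have h2 : q i ∣ q j := (Nat.dvd_add_right (hQk j)).1 h
      exact hij (hinj ((Nat.prime_dvd_prime_iff_eq (hq i).1 (hq j).1).1 h2))
end

section
/- Let J be a finite set; for each W ∈ J let N_W and n_W be positive integers, and for each nonempty subset J' ⊆ J let c_{J'} be an integer. In the field ℂ(s) of univariate rational functions define Z(s) = Σ_{∅≠J'⊆J} c_{J'} · Π_{W∈J'} 1/(N_W·s + n_W). Fix W₀ ∈ J such that n_{W₀}·N_W ≠ n_W·N_{W₀} for every W ∈ J∖{W₀}, and set r = −n_{W₀}/N_{W₀}. Then: (1) the rational function (N_{W₀}·s + n_{W₀})·Z(s) can be written as a quotient P(s)/Q(s) of polynomials with Q(r) ≠ 0, and its value at s = r equals R := Σ_{J'⊆J∖{W₀}} c_{J'∪{W₀}} · Π_{W∈J'} N_{W₀}/(N_{W₀}·n_W − N_W·n_{W₀}) (the empty product being 1); (2) r is a pole of Z of order exactly one if R ≠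 0, and Z has no pole at r if R = 0; in particular the pole order of Z at r is at most one. -/
open Polynomial

/-!
Work in the local ring of rational functions regular at `r`, on which evaluation at `r` is a
well-defined ring homomorphism; `RegAt r F v` says that `F` lies in this ring and has value `v`.
Put `L = N_{W₀} s + n_{W₀}`, which vanishes at `r`. The hypothesis on `W₀` says that no other
factor `N_W s + n_W` vanishes at `r`. Sorting the subsets by whether they contain `W₀` gives
`L * Z = L * A + B` with `A` and `B` regular at `r`, and `B` takes the value `R` there; so `L * Z`
has value `R`. If `Z` were regular, `L * Z` would have value `0`, forcing `R = 0`
(`RegAt.unique`). Conversely, a regular function with value `0` is divisible by `X - r`, hence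
by `L`, in the local ring (`RegAt.of_linear_mul`).
-/

/-- The rational function `F` is regular at `r`, with value `v` there. -/
def RegAt (r : ℂ) (F : RatFunc ℂ) (v : ℂ) : Prop :=
  ∃ P Q : Polynomial ℂ,
    F = algebraMap (Polynomial ℂ) (RatFunc ℂ) P / algebraMap (Polynomial ℂ) (RatFunc ℂ) Q ∧
      Q.eval r ≠ 0 ∧ P.eval r / Q.eval r = v

namespace RegAt

lemma algebraMap_ne_zero {r : ℂ} {Q : Polynomial ℂ} (h : Q.eval r ≠ 0) :
    algebraMap (Polynomial ℂ) (RatFunc ℂ) Q ≠ 0 := by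
  apply RatFunc.algebraMap_ne_zero
  rintro rfl
  simp at h

lemma poly (r : ℂ) (P : Polynomial ℂ) :
    RegAt r (algebraMap (Polynomial ℂ) (RatFunc ℂ) P) (P.eval r) :=
  ⟨P, 1, by simp, by simp, by simp⟩

lemma intCast (r : ℂ) (m : ℤ) : RegAt r (m : RatFunc ℂ) m := by
  simpa using poly r (m : Polynomial ℂ)

lemma linear (r : ℂ) (a b : ℕ) :
    RegAt r ((a : RatFunc ℂ) * RatFunc.X + (b : RatFunc ℂ)) (a * r + b) := by
  have h := poly r ((a : Polynomial ℂ) * X + (b : Polynomial ℂ))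
  rwa [map_add, map_mul, map_natCast, map_natCast, RatFunc.algebraMap_X, eval_add, eval_mul,
    eval_natCast, eval_natCast, eval_X] at h

lemma add {r : ℂ} {F G : RatFunc ℂ} {v w : ℂ} (hF : RegAt r F v) (hG : RegAt r G w) :
    RegAt r (F + G) (v + w) := by
  obtain ⟨P, Q, rfl, hQ, rfl⟩ := hF
  obtain ⟨P', Q', rfl, hQ', rfl⟩ := hG
  refine ⟨P * Q' + Q * P', Q * Q', ?_, by simp [hQ, hQ'], ?_⟩
  · rw [div_add_div _ _ (algebraMap_ne_zero hQ) (algebraMap_ne_zero hQ')]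
    simp only [map_add, map_mul]
  · rw [div_add_div _ _ hQ hQ']
    simp only [eval_add, eval_mul]

lemma mul {r : ℂ} {F G : RatFunc ℂ} {v w : ℂ} (hF : RegAt r F v) (hG : RegAt r G w) :
    RegAt r (F * G) (v * w) := by
  obtain ⟨P, Q, rfl, hQ, rfl⟩ := hF
  obtain ⟨P', Q', rfl, hQ', rfl⟩ := hG
  refine ⟨P * P', Q * Q', ?_, by simp [hQ, hQ'], ?_⟩
  · rw [div_mul_div_comm]
    simp only [map_mul]
  · rw [div_mul_div_comm]
    simp only [eval_mul]

lemma inv {r : ℂ} {F : RatFunc ℂ} {v : ℂ} (hF : RegAt r F v) (hv : v ≠ 0) :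
    RegAt r F⁻¹ v⁻¹ := by
  obtain ⟨P, Q, rfl, hQ, rfl⟩ := hF
  exact ⟨Q, P, by rw [inv_div], fun h => hv (by simp [h]), by rw [inv_div]⟩

lemma sum {r : ℂ} {ι : Type*} (s : Finset ι) {F : ι → RatFunc ℂ} {v : ι → ℂ}
    (h : ∀ i ∈ s, RegAt r (F i) (v i)) : RegAt r (∑ i ∈ s, F i) (∑ i ∈ s, v i) := by
  classical
  induction s using Finset.induction_on with
  | empty => simpa using poly r 0
  | insert i s hi ih =>
    rw [Finset.sum_insert hi, Finset.sum_insert hi]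
    exact (h i (by simp)).add (ih fun j hj => h j (by simp [hj]))

lemma prod {r : ℂ} {ι : Type*} (s : Finset ι) {F : ι → RatFunc ℂ} {v : ι → ℂ}
    (h : ∀ i ∈ s, RegAt r (F i) (v i)) : RegAt r (∏ i ∈ s, F i) (∏ i ∈ s, v i) := by
  classical
  induction s using Finset.induction_on with
  | empty => simpa using poly r 1
  | insert i s hi ih =>
    rw [Finset.prod_insert hi, Finset.prod_insert hi]
    exact (h i (by simp)).mul (ih fun j hj => h j (by simp [hj]))

/-- The value at `r` does not depend on the fraction representing the function. -/
lemma unique {r : ℂ} {F : RatFunc ℂ} {v w : ℂ} (hF : RegAt r F v) (hG : RegAt r F w) :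
    v = w := by
  obtain ⟨P, Q, rfl, hQ, rfl⟩ := hF
  obtain ⟨P', Q', h, hQ', rfl⟩ := hG
  rw [div_eq_div_iff (algebraMap_ne_zero hQ) (algebraMap_ne_zero hQ'), ← map_mul, ← map_mul] at h
  have h' := congrArg (eval r) (RatFunc.algebraMap_injective ℂ h)
  rw [div_eq_div_iff hQ hQ']
  simpa using h'

/-- If a linear form vanishing at `r` times `F` is regular with value `0` at `r`, then `F` itself
is regular at `r`: the zero of the numerator cancels the linear form. -/
lemma of_linear_mul {r : ℂ} {F : RatFunc ℂ} {a b : ℕ} (ha : a ≠ 0) (hab : (a : ℂ) * r + b = 0)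
    (h : RegAt r (((a : RatFunc ℂ) * RatFunc.X + (b : RatFunc ℂ)) * F) 0) :
    ∃ v, RegAt r F v := by
  obtain ⟨P, Q, hPQ, hQ, hv⟩ := h
  have hP : P.eval r = 0 := by simpa [hQ] using hv
  obtain ⟨P', rfl⟩ := dvd_iff_isRoot.mpr hP
  have ha' : (a : ℂ) ≠ 0 := Nat.cast_ne_zero.mpr ha
  have hL : (a : RatFunc ℂ) * RatFunc.X + (b : RatFunc ℂ) =
      algebraMap (Polynomial ℂ) (RatFunc ℂ) (C (a : ℂ)) *
        algebraMap (Polynomial ℂ) (RatFunc ℂ) (X - C r) := by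
    have : (C (a : ℂ)) * (X - C r) = (a : Polynomial ℂ) * X + (b : Polynomial ℂ) := by
      have hb : (b : ℂ) = -(a * r) := by linear_combination hab
      rw [← C_eq_natCast b, hb, ← C_eq_natCast a, C_neg, C_mul]
      ring
    rw [← map_mul, this, map_add, map_mul, map_natCast, map_natCast, RatFunc.algebraMap_X]
  have h1 : algebraMap (Polynomial ℂ) (RatFunc ℂ) (C (a : ℂ)) ≠ 0 :=
    RatFunc.algebraMap_ne_zero (by simpa using ha)
  have h2 : algebraMap (Polynomial ℂ) (RatFunc ℂ) (X - C r) ≠ 0 :=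
    RatFunc.algebraMap_ne_zero (X_sub_C_ne_zero r)
  refine ⟨_, P', C (a : ℂ) * Q, ?_, by simp [ha, hQ], rfl⟩
  have h3 := algebraMap_ne_zero hQ
  rw [hL, map_mul] at hPQ
  rw [map_mul, eq_div_iff (mul_ne_zero h1 h3)]
  rw [eq_div_iff h3] at hPQ
  apply mul_left_cancel₀ h2
  linear_combination hPQ

end RegAt

/-- For the univariate topological zeta function
`Z(s) = Σ_{∅≠J'⊆J} c_{J'} Π_{W∈J'} 1/(N_W s + n_W)` and a component `W₀` with
`n_{W₀} N_W ≠ n_W N_{W₀}` for all `W ≠ W₀`, setting `r = -n_{W₀}/N_{W₀}`: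
(1) `(N_{W₀} s + n_{W₀}) Z(s)` is regular at `r` with value
`R = Σ_{J'⊆J∖{W₀}} c_{J'∪{W₀}} Π_{W∈J'} N_{W₀}/(N_{W₀} n_W − N_W n_{W₀})`;
(2) `Z` has a pole at `r` (necessarily of order one) iff `R ≠ 0`. -/
theorem stmt_5 {J : Type*} [Fintype J] [DecidableEq J]
    (N n : J → ℕ) (hN : ∀ W, 0 < N W) (hn : ∀ W, 0 < n W)
    (c : Finset J → ℤ)
    (Z : RatFunc ℂ)
    (hZ : Z = ∑ J' ∈ Finset.univ.powerset.filter Finset.Nonempty,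
      (c J' : RatFunc ℂ) *
        ∏ W ∈ J', ((N W : RatFunc ℂ) * RatFunc.X + (n W : RatFunc ℂ))⁻¹)
    (W₀ : J)
    (hres : ∀ W, W ≠ W₀ → n W₀ * N W ≠ n W * N W₀)
    (r : ℂ) (hr : r = -(n W₀ : ℂ) / (N W₀ : ℂ))
    (R : ℂ)
    (hR : R = ∑ J' ∈ (Finset.univ.erase W₀).powerset,
      (c (insert W₀ J') : ℂ) *
        ∏ W ∈ J', (N W₀ : ℂ) / ((N W₀ : ℂ) * (n W : ℂ) - (N W : ℂ) * (n W₀ : ℂ))) :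
    (∃ P Q : Polynomial ℂ,
      ((N W₀ : RatFunc ℂ) * RatFunc.X + (n W₀ : RatFunc ℂ)) * Z
          = algebraMap (Polynomial ℂ) (RatFunc ℂ) P / algebraMap (Polynomial ℂ) (RatFunc ℂ) Q ∧
        Q.eval r ≠ 0 ∧ P.eval r / Q.eval r = R) ∧
    (R ≠ 0 → ¬ ∃ P Q : Polynomial ℂ,
      Z = algebraMap (Polynomial ℂ) (RatFunc ℂ) P / algebraMap (Polynomial ℂ) (RatFunc ℂ) Q ∧
        Q.eval r ≠ 0) ∧
    (R = 0 → ∃ P Q : Polynomial ℂ,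
      Z = algebraMap (Polynomial ℂ) (RatFunc ℂ) P / algebraMap (Polynomial ℂ) (RatFunc ℂ) Q ∧
        Q.eval r ≠ 0) := by
  have hN₀ : (N W₀ : ℂ) ≠ 0 := Nat.cast_ne_zero.mpr (hN W₀).ne'
  have hr₀ : (N W₀ : ℂ) * r + n W₀ = 0 := by
    rw [hr]
    field_simp
    ring
  have hfac : ∀ W, W ≠ W₀ → RegAt r ((N W : RatFunc ℂ) * RatFunc.X + (n W : RatFunc ℂ))⁻¹
      ((N W₀ : ℂ) / ((N W₀ : ℂ) * (n W : ℂ) - (N W : ℂ) * (n W₀ : ℂ))) := by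
    intro W hW
    have hne : (N W₀ : ℂ) * (n W : ℂ) - (N W : ℂ) * (n W₀ : ℂ) ≠ 0 := by
      intro h
      apply hres W hW
      have : (n W₀ : ℂ) * N W = n W * N W₀ := by linear_combination -h
      exact_mod_cast this
    have hval : (N W : ℂ) * r + n W =
        ((N W₀ : ℂ) * (n W : ℂ) - (N W : ℂ) * (n W₀ : ℂ)) / N W₀ := by
      rw [hr]
      field_simp
      ring
    have h := RegAt.linear r (N W) (n W)
    rw [hval] at h
    simpa only [inv_div] using h.inv (div_ne_zero hne hN₀)
  have hprod : ∀ J' ∈ (Finset.univ.erase W₀).powerset,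
      RegAt r (∏ W ∈ J', ((N W : RatFunc ℂ) * RatFunc.X + (n W : RatFunc ℂ))⁻¹)
        (∏ W ∈ J', (N W₀ : ℂ) / ((N W₀ : ℂ) * (n W : ℂ) - (N W : ℂ) * (n W₀ : ℂ))) := by
    intro J' hJ'
    refine RegAt.prod _ fun W hW => hfac W ?_
    exact Finset.ne_of_mem_erase (Finset.mem_powerset.mp hJ' hW)
  have hL : (N W₀ : RatFunc ℂ) * RatFunc.X + (n W₀ : RatFunc ℂ) ≠ 0 := by
    intro h
    -- A vanishing linear form would also take the value `0` at `r + 1`, where its value is `N W₀`.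
    have h1 := RegAt.linear (r + 1) (N W₀) (n W₀)
    rw [h] at h1
    have h2 := h1.unique (by simpa using RegAt.poly (r + 1) 0)
    exact hN₀ (by linear_combination h2 - hr₀)
  have key : RegAt r (((N W₀ : RatFunc ℂ) * RatFunc.X + (n W₀ : RatFunc ℂ)) * Z) R := by
    have hsplit : ((N W₀ : RatFunc ℂ) * RatFunc.X + (n W₀ : RatFunc ℂ)) * Z =
        ((N W₀ : RatFunc ℂ) * RatFunc.X + (n W₀ : RatFunc ℂ)) *
          (∑ J' ∈ (Finset.univ.erase W₀).powerset.filter Finset.Nonempty, (c J' : RatFunc ℂ) *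
            ∏ W ∈ J', ((N W : RatFunc ℂ) * RatFunc.X + (n W : RatFunc ℂ))⁻¹) +
        ∑ J' ∈ (Finset.univ.erase W₀).powerset, (c (insert W₀ J') : RatFunc ℂ) *
            ∏ W ∈ J', ((N W : RatFunc ℂ) * RatFunc.X + (n W : RatFunc ℂ))⁻¹ := by
      rw [hZ, ← Finset.insert_erase (Finset.mem_univ W₀), Finset.sum_filter,
        Finset.sum_powerset_insert (Finset.notMem_erase W₀ _), Finset.insert_erase
        (Finset.mem_univ W₀), mul_add, ← Finset.sum_filter]
      congr 1
      rw [Finset.mul_sum]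
      refine Finset.sum_congr rfl fun J' hJ' => ?_
      have hW₀ : W₀ ∉ J' := fun h =>
        Finset.notMem_erase W₀ _ (Finset.mem_powerset.mp hJ' h)
      rw [if_pos (Finset.insert_nonempty _ _), Finset.prod_insert hW₀, mul_left_comm,
        mul_inv_cancel_left₀ hL]
    rw [hsplit, hR]
    have hA := RegAt.sum ((Finset.univ.erase W₀).powerset.filter Finset.Nonempty)
      fun J' hJ' => (RegAt.intCast r (c J')).mul (hprod J' (Finset.mem_filter.mp hJ').1)
    have hB := RegAt.sum (Finset.univ.erase W₀).powerset
      fun J' hJ' => (RegAt.intCast r (c (insert W₀ J'))).mul (hprod J' hJ')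
    have h := ((RegAt.linear r (N W₀) (n W₀)).mul hA).add hB
    rwa [hr₀, zero_mul, zero_add] at h
  refine ⟨key, ?_, ?_⟩
  · rintro hR₀ ⟨P, Q, hPQ, hQ⟩
    have hreg : RegAt r Z (P.eval r / Q.eval r) := ⟨P, Q, hPQ, hQ, rfl⟩
    have h := (RegAt.linear r (N W₀) (n W₀)).mul hreg
    rw [hr₀, zero_mul] at h
    exact hR₀ (key.unique h)
  · intro hR₀
    rw [hR₀] at key
    obtain ⟨v, P, Q, hPQ, hQ, -⟩ := RegAt.of_linear_mul (hN W₀).ne' hr₀ key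
    exact ⟨P, Q, hPQ, hQ⟩
end

section
/- Let m ≥ 1 be an integer and J a finite set. For each W ∈ J let a_W ∈ ℕ^m be a nonzero vector and n_W a positive integer; set ℓ_W = a_{W,1}·s_1 + ⋯ + a_{W,m}·s_m + n_W ∈ ℂ[s_1,…,s_m] and N_W = a_{W,1} + ⋯ + a_{W,m}. For each nonempty subset J' ⊆ J let c_{J'} be an integer, and define Z = Σ_{∅≠J'⊆J} c_{J'} · Π_{W∈J'} ℓ_W^{-1} in the fraction field of ℂ[s_1,…,s_m]. Fix W₀ ∈ J and set r = −n_{W₀}/N_{W₀}. Assume that ℓ_W(r,…,r) ≠ 0 for every W ∈ J∖{W₀}, and that the univariate rational function Z(s,…,s), obtained by substituting s_1 = ⋯ = s_m = s, has a pole at s = r (that is, it cannot be written as a quotient of univariate polynomials whose denominator is nonzero at r). Then Z cannot be written as a quotient P/Q of polynomials in ℂ[s_1,…,s_m] with ℓ_{W₀} not dividing Q; that is, the hyperplane {ℓ_{W₀} = 0} belongs to the polar locus of Z. -/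
/-! Clearing denominators gives `Z = A / Π_W ℓ_W` with
`A = Σ_{J'} c_{J'} Π_{W ∉ J'} ℓ_W` a polynomial (`sum_prod_inv_eq_div`).
If `Z = P / Q` with `ℓ_{W₀} ∤ Q`, then `A * Q = P * Π_W ℓ_W`; since `ℓ_{W₀}` has total degree one it
is prime (`prime_affine_form`), so it divides `A`, say `A = ℓ_{W₀} * B`.
Restricting to the diagonal, one factor `ℓ_{W₀}(s,…,s)` cancels and
`Z(s,…,s) = B(s,…,s) / Π_{W ≠ W₀} ℓ_W(s,…,s)`, whose denominator does not vanish at `r`.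
This contradicts the pole at `r`. -/

/-- Common denominator for a zeta-type sum, valid in any field. -/
lemma sum_prod_inv_eq_div {J K : Type*} [Fintype J] [DecidableEq J] [Field K]
    (S : Finset (Finset J)) (c : Finset J → ℤ) (f : J → K) (hf : ∀ W, f W ≠ 0) :
    ∑ J' ∈ S, (c J' : K) * ∏ W ∈ J', (f W)⁻¹
      = (∑ J' ∈ S, (c J' : K) * ∏ W ∈ J'ᶜ, f W) / ∏ W, f W := by
  rw [Finset.sum_div]
  refine Finset.sum_congr rfl fun J' _ => ?_
  have h1 : ∏ W ∈ J', f W ≠ 0 := Finset.prod_ne_zero_iff.2 fun W _ => hf W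
  have h2 : ∏ W ∈ J'ᶜ, f W ≠ 0 := Finset.prod_ne_zero_iff.2 fun W _ => hf W
  rw [← Finset.prod_mul_prod_compl J' f, Finset.prod_inv_distrib]
  field_simp

lemma prime_affine_form {m : ℕ} (b : Fin m → ℕ) (hb : b ≠ 0) (k : ℕ) :
    Prime ((∑ i, (b i : MvPolynomial (Fin m) ℂ) * MvPolynomial.X i)
      + (k : MvPolynomial (Fin m) ℂ)) := by
  classical
  obtain ⟨j, hj⟩ := Function.ne_iff.1 hb
  have hj' : (b j : ℂ) ≠ 0 := by exact_mod_cast hj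
  set p : MvPolynomial (Fin m) ℂ := (∑ i, (b i : MvPolynomial (Fin m) ℂ) * MvPolynomial.X i)
      + (k : MvPolynomial (Fin m) ℂ) with hp
  have hC (x : ℕ) : (x : MvPolynomial (Fin m) ℂ) = MvPolynomial.C (x : ℂ) := by simp
  have hcoeff : p.coeff (Finsupp.single j 1) = b j := by
    have h0 : (0 : Fin m →₀ ℕ) ≠ Finsupp.single j 1 := by
      simp [eq_comm]
    simp only [hp, hC, MvPolynomial.coeff_add, MvPolynomial.coeff_sum,
      MvPolynomial.coeff_C_mul, MvPolynomial.coeff_X, MvPolynomial.coeff_C, if_neg h0]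
    simp [Finsupp.single_left_inj]
  refine (MvPolynomial.irreducible_of_totalDegree_eq_one (le_antisymm ?_ ?_) ?_).prime
  · refine (MvPolynomial.totalDegree_add _ _).trans (max_le ?_ ?_)
    · refine MvPolynomial.totalDegree_finsetSum_le fun i _ => ?_
      refine (MvPolynomial.totalDegree_mul _ _).trans ?_
      rw [hC, MvPolynomial.totalDegree_C, MvPolynomial.totalDegree_X]
    · rw [hC, MvPolynomial.totalDegree_C]
      exact zero_le_one
  · have hmem : Finsupp.single j 1 ∈ p.support := by
      rw [MvPolynomial.mem_support_iff, hcoeff]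
      exact hj'
    simpa using MvPolynomial.le_totalDegree hmem
  · intro x hx
    refine isUnit_iff_ne_zero.2 ?_
    rintro rfl
    exact hj' (hcoeff ▸ zero_dvd_iff.1 (hx (Finsupp.single j 1)))

/-- For the multivariate topological zeta function
`Z = Σ_{∅≠J'⊆J} c_{J'} Π_{W∈J'} ℓ_W⁻¹` with affine-linear forms
`ℓ_W = Σ_i a_{W,i} s_i + n_W`, if the diagonal restriction `Z(s,…,s)` has a pole at
`r = −n_{W₀}/N_{W₀}` and `ℓ_W(r,…,r) ≠ 0` for every `W ≠ W₀`, then the hyperplane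
`{ℓ_{W₀} = 0}` belongs to the polar locus of `Z`: in any representation `Z = P/Q`,
the form `ℓ_{W₀}` divides the denominator `Q`. -/
theorem stmt_6 (m : ℕ) (hm : 1 ≤ m) {J : Type*} [Fintype J] [DecidableEq J]
    (a : J → Fin m → ℕ) (ha : ∀ W, a W ≠ 0)
    (n : J → ℕ) (hn : ∀ W, 0 < n W)
    (ℓ : J → MvPolynomial (Fin m) ℂ)
    (hℓ : ∀ W, ℓ W = (∑ i, (a W i : MvPolynomial (Fin m) ℂ) * MvPolynomial.X i)
      + (n W : MvPolynomial (Fin m) ℂ))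
    (N : J → ℕ) (hNdef : ∀ W, N W = ∑ i, a W i)
    (c : Finset J → ℤ)
    (Z : FractionRing (MvPolynomial (Fin m) ℂ))
    (hZ : Z = ∑ J' ∈ Finset.univ.powerset.filter Finset.Nonempty,
      (c J' : FractionRing (MvPolynomial (Fin m) ℂ)) *
        ∏ W ∈ J', (algebraMap (MvPolynomial (Fin m) ℂ)
          (FractionRing (MvPolynomial (Fin m) ℂ)) (ℓ W))⁻¹)
    (W₀ : J) (r : ℂ) (hr : r = -(n W₀ : ℂ) / (N W₀ : ℂ))
    (hvan : ∀ W, W ≠ W₀ → MvPolynomial.eval (fun _ => r) (ℓ W) ≠ 0)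
    -- the diagonal restriction `Z(s,…,s)` has a pole at `s = r`:
    (hpole : ¬ ∃ P Q : Polynomial ℂ,
      (∑ J' ∈ Finset.univ.powerset.filter Finset.Nonempty,
          (c J' : RatFunc ℂ) *
            ∏ W ∈ J', ((N W : RatFunc ℂ) * RatFunc.X + (n W : RatFunc ℂ))⁻¹)
        = algebraMap (Polynomial ℂ) (RatFunc ℂ) P / algebraMap (Polynomial ℂ) (RatFunc ℂ) Q ∧
      Polynomial.eval r Q ≠ 0) :
    ¬ ∃ P Q : MvPolynomial (Fin m) ℂ,
      Z = algebraMap (MvPolynomial (Fin m) ℂ) (FractionRing (MvPolynomial (Fin m) ℂ)) P /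
          algebraMap (MvPolynomial (Fin m) ℂ) (FractionRing (MvPolynomial (Fin m) ℂ)) Q ∧
      ¬ (ℓ W₀ ∣ Q) := by
  rintro ⟨P, Q, hPQ, hdvd⟩
  apply hpole
  have hprime : ∀ W, Prime (ℓ W) := fun W => by
    rw [hℓ W]
    exact prime_affine_form (a W) (ha W) (n W)
  have hQ : Q ≠ 0 := by
    rintro rfl
    exact hdvd (dvd_zero _)
  set S : Finset (Finset J) := Finset.univ.powerset.filter Finset.Nonempty
  set A : MvPolynomial (Fin m) ℂ :=
    ∑ J' ∈ S, (c J' : MvPolynomial (Fin m) ℂ) * ∏ W ∈ J'ᶜ, ℓ W with hA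
  have hinj := IsFractionRing.injective (MvPolynomial (Fin m) ℂ)
    (FractionRing (MvPolynomial (Fin m) ℂ))
  have hAQ : A * Q = P * ∏ W, ℓ W := by
    rw [sum_prod_inv_eq_div S c _ fun W =>
      (map_ne_zero_iff _ hinj).2 (hprime W).ne_zero] at hZ
    have hZ' := hZ.symm.trans hPQ
    rw [div_eq_div_iff
      (Finset.prod_ne_zero_iff.2 fun W _ => (map_ne_zero_iff _ hinj).2 (hprime W).ne_zero)
      ((map_ne_zero_iff _ hinj).2 hQ)] at hZ'
    apply hinj
    simpa [hA, map_sum, map_prod] using hZ'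
  have hdiv : ℓ W₀ ∣ A * Q := by
    rw [hAQ]
    exact (Finset.dvd_prod_of_mem ℓ (Finset.mem_univ W₀)).mul_left P
  obtain ⟨B, hB⟩ := ((hprime W₀).dvd_or_dvd hdiv).resolve_right hdvd
  -- `φ` restricts polynomials to the diagonal.
  let φ : MvPolynomial (Fin m) ℂ →ₐ[ℂ] Polynomial ℂ :=
    MvPolynomial.aeval fun _ => Polynomial.X
  have hφℓ : ∀ W, φ (ℓ W) = (N W : Polynomial ℂ) * Polynomial.X + (n W : Polynomial ℂ) := by
    intro W
    simp [φ, hℓ W, hNdef W, Finset.sum_mul]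
  have hφeval : ∀ p, Polynomial.eval r (φ p) = MvPolynomial.eval (fun _ => r) p := by
    intro p
    induction p using MvPolynomial.induction_on with
    | C x => simp [φ]
    | add p q hp hq => simp [hp, hq]
    | mul_X p i hp => rw [map_mul, Polynomial.eval_mul, hp]; simp [φ]
  -- The constant term `n W` is positive, so no form vanishes identically on the diagonal.
  have hφne : ∀ W, φ (ℓ W) ≠ 0 := by
    intro W h
    have h0 := congrArg (Polynomial.eval 0) h
    rw [hφℓ W] at h0
    have : n W = 0 := by simpa using h0
    exact (hn W).ne' this
  have hinj' := IsFractionRing.injective (Polynomial ℂ) (RatFunc ℂ)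
  have hform : ∀ W, (N W : RatFunc ℂ) * RatFunc.X + (n W : RatFunc ℂ)
      = algebraMap (Polynomial ℂ) (RatFunc ℂ) (φ (ℓ W)) := by
    intro W
    simp [hφℓ W]
  have hne : ∀ W, algebraMap (Polynomial ℂ) (RatFunc ℂ) (φ (ℓ W)) ≠ 0 := fun W =>
    (map_ne_zero_iff _ hinj').2 (hφne W)
  refine ⟨φ B, ∏ W ∈ Finset.univ.erase W₀, φ (ℓ W), ?_, ?_⟩
  · simp only [hform]
    rw [sum_prod_inv_eq_div S c _ hne]
    have hnum : ∑ J' ∈ S, (c J' : RatFunc ℂ) *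
        ∏ W ∈ J'ᶜ, algebraMap (Polynomial ℂ) (RatFunc ℂ) (φ (ℓ W))
        = algebraMap (Polynomial ℂ) (RatFunc ℂ) (φ A) := by
      simp [hA, map_sum, map_prod]
    rw [hnum, hB, map_mul, map_mul, ← Finset.mul_prod_erase _ _ (Finset.mem_univ W₀), map_prod,
      mul_div_mul_left _ _ (hne W₀)]
  · rw [Polynomial.eval_prod]
    refine Finset.prod_ne_zero_iff.2 fun W hW => ?_
    rw [hφeval]
    exact hvan W (Finset.ne_of_mem_erase hW)
end
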